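/- arXiv:2105.02077 — 4 statements merged into one kernel-verified Lean document; each statement's English description precedes it below -/
import Mathlib

section
/- Case-base sampling identifies the conditional intention-to-treat risk ratio (Theorem B2). Assume there are constants δ_l ∈ (0,1] such that P(S=1 | L0=l, A0=a) = δ_l for every l with P(L0=l, A0=a) > 0 and every a ∈ {0,1}. Assume consistency, BCE, and positivity, and fix l with P(L0=l, Y_K=1) > 0, P(L0=l, S=1) > 0, and P(Y_K(0)=1 | L0=l) > 0. Then ( E[1{A0=1} | L0=l, Y_K=1] / E[1{A0=0} | L0=l, Y_K=1] ) / ( E[1{A0=1} | L0=l, S=1] / E[1{A0=0} | L0=l, S=1] ) = P(Y_K(1)=1 | L0=l) / P(Y_K(0)=1 | L0=l). -/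
open MeasureTheory

/-- `prb P E` is the probability of the event `E` under `P`, as a real number. -/
noncomputable def prb {Ω : Type*} [MeasurableSpace Ω] (P : Measure Ω) (E : Set Ω) : ℝ :=
  (P E).toReal

/-- `cprb P E F` is the conditional probability `P(E | F)`. -/
noncomputable def cprb {Ω : Type*} [MeasurableSpace Ω] (P : Measure Ω) (E F : Set Ω) : ℝ :=
  prb P (E ∩ F) / prb P F

/-- `cexpb P X F` is the conditional expectation `E[X | F]` of the random variable `X`
given the event `F`. -/
noncomputable def cexpb {Ω : Type*} [MeasurableSpace Ω] (P : Measure Ω) (X : Ω → ℝ)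
    (F : Set Ω) : ℝ :=
  (∫ ω in F, X ω ∂P) / prb P F

/-- The numerator of the conditional expectation of an indicator; `F` need not be measurable. -/
lemma cexpb_ind {Ω : Type*} [MeasurableSpace Ω] (P : Measure Ω)
    (A0 : Ω → Bool) (hA0 : Measurable A0) (a : Bool) (F : Set Ω) :
    cexpb P (fun ω => if A0 ω = a then (1:ℝ) else 0) F =
      prb P ({ω | A0 ω = a} ∩ F) / prb P F := by
  have hm : MeasurableSet {ω | A0 ω = a} := hA0 (measurableSet_singleton a)
  have h1 : (fun ω => if A0 ω = a then (1:ℝ) else 0) =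
      Set.indicator {ω | A0 ω = a} (fun _ => (1:ℝ)) := by
    funext ω
    simp [Set.indicator_apply]
  unfold cexpb prb
  rw [h1, integral_indicator hm, setIntegral_const, Measure.real, Measure.restrict_apply hm]
  simp

/-- Theorem B2: case-base sampling identifies the conditional intention-to-treat
risk ratio. -/
theorem caseBase_conditional_ITT_riskRatio
    {Ω : Type*} [MeasurableSpace Ω] (P : Measure Ω) [IsProbabilityMeasure P]
    {𝓛 : Type*} [Fintype 𝓛] [MeasurableSpace 𝓛]
    (L0 : Ω → 𝓛) (A0 YK S : Ω → Bool) (Ycf : Bool → Ω → Bool)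
    (hL0 : Measurable L0) (hA0 : Measurable A0) (hYK : Measurable YK)
    (hS : Measurable S) (hYcf : ∀ a, Measurable (Ycf a))
    -- covariate-dependent sampling fractions
    (δ : 𝓛 → ℝ) (hδpos : ∀ l, 0 < δ l) (hδle : ∀ l, δ l ≤ 1)
    (hS1 : ∀ (l : 𝓛) (a : Bool), 0 < prb P {ω | L0 ω = l ∧ A0 ω = a} →
      cprb P {ω | S ω = true} {ω | L0 ω = l ∧ A0 ω = a} = δ l)
    -- consistency
    (hcons : ∀ a : Bool, ∀ᵐ ω ∂P, A0 ω = a → YK ω = Ycf a ω)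
    -- baseline conditional exchangeability
    (hBCE : ∀ (a : Bool) (l : 𝓛), 0 < prb P {ω | L0 ω = l} → ∀ (y a' : Bool),
      cprb P {ω | Ycf a ω = y ∧ A0 ω = a'} {ω | L0 ω = l} =
        cprb P {ω | Ycf a ω = y} {ω | L0 ω = l} *
          cprb P {ω | A0 ω = a'} {ω | L0 ω = l})
    -- positivity
    (hpos : ∀ l : 𝓛, 0 < prb P {ω | L0 ω = l} →
      0 < cprb P {ω | A0 ω = true} {ω | L0 ω = l} ∧
        cprb P {ω | A0 ω = true} {ω | L0 ω = l} < 1)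
    -- the fixed covariate level l
    (l : 𝓛)
    (hlY : 0 < prb P {ω | L0 ω = l ∧ YK ω = true})
    (hlS : 0 < prb P {ω | L0 ω = l ∧ S ω = true})
    (hlY0 : 0 < cprb P {ω | Ycf false ω = true} {ω | L0 ω = l}) :
    (cexpb P (fun ω => if A0 ω = true then (1:ℝ) else 0)
        ({ω | L0 ω = l} ∩ {ω | YK ω = true}) /
      cexpb P (fun ω => if A0 ω = false then (1:ℝ) else 0)
        ({ω | L0 ω = l} ∩ {ω | YK ω = true})) /
    (cexpb P (fun ω => if A0 ω = true then (1:ℝ) else 0)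
        ({ω | L0 ω = l} ∩ {ω | S ω = true}) /
      cexpb P (fun ω => if A0 ω = false then (1:ℝ) else 0)
        ({ω | L0 ω = l} ∩ {ω | S ω = true})) =
    cprb P {ω | Ycf true ω = true} {ω | L0 ω = l} /
      cprb P {ω | Ycf false ω = true} {ω | L0 ω = l} := by
  set p := prb P {ω | L0 ω = l} with hp
  have hp0 : 0 < p := by
    refine lt_of_lt_of_le hlY ?_
    exact ENNReal.toReal_mono (measure_ne_top _ _) (measure_mono fun ω h => h.1)
  have hsetLA : ∀ a : Bool, {ω | L0 ω = l ∧ A0 ω = a} = {ω | A0 ω = a} ∩ {ω | L0 ω = l} := by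
    intro a; ext ω; simp [and_comm]
  have hadd : prb P ({ω | A0 ω = true} ∩ {ω | L0 ω = l}) +
      prb P ({ω | A0 ω = false} ∩ {ω | L0 ω = l}) = p := by
    have hm : MeasurableSet {ω | A0 ω = true} := hA0 (measurableSet_singleton true)
    have h := measure_inter_add_diff (μ := P) {ω | L0 ω = l} hm
    have e : {ω | L0 ω = l} \ {ω | A0 ω = true} = {ω | A0 ω = false} ∩ {ω | L0 ω = l} := by
      ext ω; simp [and_comm]
    rw [e, Set.inter_comm] at h
    rw [hp]
    unfold prb
    rw [← h, ENNReal.toReal_add (measure_ne_top _ _) (measure_ne_top _ _)]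
  obtain ⟨hq1, hq2⟩ := hpos l hp0
  have ha : ∀ a : Bool, 0 < prb P ({ω | A0 ω = a} ∩ {ω | L0 ω = l}) := by
    unfold cprb at hq1 hq2
    rw [← hp] at hq1 hq2
    rw [div_lt_one hp0] at hq2
    intro a
    cases a
    · linarith
    · exact (div_pos_iff_of_pos_right hp0).1 hq1
  have hSa : ∀ a : Bool, prb P ({ω | A0 ω = a} ∩ ({ω | L0 ω = l} ∩ {ω | S ω = true})) =
      δ l * prb P ({ω | A0 ω = a} ∩ {ω | L0 ω = l}) := by
    intro a
    have h := hS1 l a (by rw [hsetLA]; exact ha a)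
    unfold cprb at h
    rw [hsetLA, div_eq_iff (ha a).ne'] at h
    rw [← h]
    congr 1
    ext ω; simp; tauto
  have hYa : ∀ a : Bool, prb P ({ω | A0 ω = a} ∩ ({ω | L0 ω = l} ∩ {ω | YK ω = true})) =
      cprb P {ω | Ycf a ω = true} {ω | L0 ω = l} *
        prb P ({ω | A0 ω = a} ∩ {ω | L0 ω = l}) := by
    intro a
    have h := hBCE a l hp0 true a
    have e : prb P ({ω | A0 ω = a} ∩ ({ω | L0 ω = l} ∩ {ω | YK ω = true})) =
        prb P ({ω | Ycf a ω = true ∧ A0 ω = a} ∩ {ω | L0 ω = l}) := by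
      unfold prb
      congr 1
      apply measure_congr
      filter_upwards [hcons a] with ω hω
      apply propext
      change (A0 ω = a ∧ L0 ω = l ∧ YK ω = true) ↔ ((Ycf a ω = true ∧ A0 ω = a) ∧ L0 ω = l)
      constructor
      · rintro ⟨h1, h2, h3⟩
        exact ⟨⟨(hω h1) ▸ h3, h1⟩, h2⟩
      · rintro ⟨⟨h1, h2⟩, h3⟩
        exact ⟨h2, h3, (hω h2).trans h1⟩
    rw [e]
    have h2 : prb P ({ω | Ycf a ω = true ∧ A0 ω = a} ∩ {ω | L0 ω = l}) =
        cprb P {ω | Ycf a ω = true ∧ A0 ω = a} {ω | L0 ω = l} * p := by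
      unfold cprb
      rw [← hp, div_mul_cancel₀ _ hp0.ne']
    have h3 : prb P ({ω | A0 ω = a} ∩ {ω | L0 ω = l}) =
        cprb P {ω | A0 ω = a} {ω | L0 ω = l} * p := by
      unfold cprb
      rw [← hp, div_mul_cancel₀ _ hp0.ne']
    rw [h2, h3, h, mul_assoc]
  have hlY' : prb P ({ω | L0 ω = l} ∩ {ω | YK ω = true}) ≠ 0 := hlY.ne'
  have hlS' : prb P ({ω | L0 ω = l} ∩ {ω | S ω = true}) ≠ 0 := hlS.ne'
  simp only [cexpb_ind P A0 hA0]
  rw [hSa, hSa, hYa, hYa, div_div_div_cancel_right₀ hlY', div_div_div_cancel_right₀ hlS']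
  have h1 := (ha true).ne'
  have h0 := (ha false).ne'
  have hd := (hδpos l).ne'
  have hc := hlY0.ne'
  generalize cprb P {ω | Ycf true ω = true} {ω | L0 ω = l} = c1
  generalize cprb P {ω | Ycf false ω = true} {ω | L0 ω = l} = c0 at hc ⊢
  field_simp
end

section
/- Survivor sampling identifies the conditional intention-to-treat odds ratio (Theorem B3). Assume S2: there are constants δ_l ∈ (0,1] such that P(S=1 | L0=l, A0=a, Y_K=y) = δ_l·(1−y) for all l, a, y with P(L0=l, A0=a, Y_K=y) > 0. Assume consistency, BCE, and positivity, and fix l with P(L0=l, Y_K=1) > 0, P(L0=l, S=1) > 0, and such that Odds(Y_K(a)=1 | L0=l) is defined and nonzero for a = 0,1. Then ( E[1{A0=1} | L0=l, Y_K=1] / E[1{A0=0} | L0=l, Y_K=1] ) / ( E[1{A0=1} | L0=l, S=1] / E[1{A0=0} | L0=l, S=1] ) = Odds(Y_K(1)=1 | L0=l) / Odds(Y_K(0)=1 | L0=l). -/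
open MeasureTheory

/-- Theorem B3: survivor sampling identifies the conditional intention-to-treat
odds ratio. -/
theorem survivor_conditional_ITT_oddsRatio
    {Ω : Type*} [MeasurableSpace Ω] (P : Measure Ω) [IsProbabilityMeasure P]
    {𝓛 : Type*} [Fintype 𝓛] [MeasurableSpace 𝓛]
    (L0 : Ω → 𝓛) (A0 YK S : Ω → Bool) (Ycf : Bool → Ω → Bool)
    (hL0 : Measurable L0) (hA0 : Measurable A0) (hYK : Measurable YK)
    (hS : Measurable S) (hYcf : ∀ a, Measurable (Ycf a))
    -- condition S2 (survivor sampling)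
    (δ : 𝓛 → ℝ) (hδpos : ∀ l, 0 < δ l) (hδle : ∀ l, δ l ≤ 1)
    (hS2 : ∀ (l : 𝓛) (a y : Bool),
      0 < prb P {ω | L0 ω = l ∧ A0 ω = a ∧ YK ω = y} →
      cprb P {ω | S ω = true} {ω | L0 ω = l ∧ A0 ω = a ∧ YK ω = y} =
        δ l * (1 - (if y = true then (1:ℝ) else 0)))
    -- consistency
    (hcons : ∀ a : Bool, ∀ᵐ ω ∂P, A0 ω = a → YK ω = Ycf a ω)
    -- baseline conditional exchangeability
    (hBCE : ∀ (a : Bool) (l : 𝓛), 0 < prb P {ω | L0 ω = l} → ∀ (y a' : Bool),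
      cprb P {ω | Ycf a ω = y ∧ A0 ω = a'} {ω | L0 ω = l} =
        cprb P {ω | Ycf a ω = y} {ω | L0 ω = l} *
          cprb P {ω | A0 ω = a'} {ω | L0 ω = l})
    -- positivity
    (hpos : ∀ l : 𝓛, 0 < prb P {ω | L0 ω = l} →
      0 < cprb P {ω | A0 ω = true} {ω | L0 ω = l} ∧
        cprb P {ω | A0 ω = true} {ω | L0 ω = l} < 1)
    -- the fixed covariate level l
    (l : 𝓛)
    (hlY : 0 < prb P {ω | L0 ω = l ∧ YK ω = true})
    (hlS : 0 < prb P {ω | L0 ω = l ∧ S ω = true})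
    -- Odds(Y_K(a)=1 | L0=l) is defined and nonzero for a = 0,1
    (hodds : ∀ a : Bool, 0 < cprb P {ω | Ycf a ω = true} {ω | L0 ω = l} ∧
      0 < cprb P {ω | Ycf a ω = false} {ω | L0 ω = l}) :
    (cexpb P (fun ω => if A0 ω = true then (1:ℝ) else 0)
        ({ω | L0 ω = l} ∩ {ω | YK ω = true}) /
      cexpb P (fun ω => if A0 ω = false then (1:ℝ) else 0)
        ({ω | L0 ω = l} ∩ {ω | YK ω = true})) /
    (cexpb P (fun ω => if A0 ω = true then (1:ℝ) else 0)
        ({ω | L0 ω = l} ∩ {ω | S ω = true}) /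
      cexpb P (fun ω => if A0 ω = false then (1:ℝ) else 0)
        ({ω | L0 ω = l} ∩ {ω | S ω = true})) =
    (cprb P {ω | Ycf true ω = true} {ω | L0 ω = l} /
        cprb P {ω | Ycf true ω = false} {ω | L0 ω = l}) /
      (cprb P {ω | Ycf false ω = true} {ω | L0 ω = l} /
        cprb P {ω | Ycf false ω = false} {ω | L0 ω = l}) := by
  classical
  set F : Set Ω := {ω | L0 ω = l} with hF
  have hmA : ∀ a, MeasurableSet {ω | A0 ω = a} := fun a => hA0 (measurableSet_singleton a)
  have hmY : ∀ a, MeasurableSet {ω | YK ω = a} := fun a => hYK (measurableSet_singleton a)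
  have hmS : ∀ a, MeasurableSet {ω | S ω = a} := fun a => hS (measurableSet_singleton a)
  have hL : 0 < prb P F := by
    refine lt_of_lt_of_le hlY ?_
    exact ENNReal.toReal_mono (measure_ne_top _ _) (measure_mono (fun ω h => h.1))
  -- integrals of indicators
  have hint : ∀ (a : Bool) (G : Set Ω),
      cexpb P (fun ω => if A0 ω = a then (1:ℝ) else 0) G = prb P ({ω | A0 ω = a} ∩ G) / prb P G := by
    intro a G
    have h1 : (fun ω => if A0 ω = a then (1:ℝ) else 0)
        = Set.indicator {ω | A0 ω = a} (fun _ => (1:ℝ)) := by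
      funext ω
      simp [Set.indicator_apply]
    unfold cexpb
    rw [h1, integral_indicator_const _ (hmA a), Measure.real, Measure.restrict_apply (hmA a)]
    simp [prb]
  -- additivity over a measurable Bool variable
  have hsplit : ∀ (X : Ω → Bool), Measurable X → ∀ E : Set Ω,
      prb P E = prb P (E ∩ {ω | X ω = true}) + prb P (E ∩ {ω | X ω = false}) := by
    intro X hX E
    have hm : MeasurableSet {ω | X ω = true} := hX (measurableSet_singleton true)
    have := measure_inter_add_diff (μ := P) E hm
    have h2 : E \ {ω | X ω = true} = E ∩ {ω | X ω = false} := by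
      ext ω; simp
    rw [h2] at this
    unfold prb
    rw [← this, ENNReal.toReal_add (measure_ne_top _ _) (measure_ne_top _ _)]
  have hAY : ∀ a y, prb P {ω | L0 ω = l ∧ A0 ω = a ∧ YK ω = y}
      = cprb P {ω | Ycf a ω = y} F * cprb P {ω | A0 ω = a} F * prb P F := by
    intro a y
    rw [← hBCE a l hL y a]
    unfold cprb
    rw [div_mul_cancel₀ _ hL.ne']
    unfold prb
    congr 1
    apply measure_congr
    filter_upwards [hcons a] with ω hω
    apply propext
    show (L0 ω = l ∧ A0 ω = a ∧ YK ω = y) ↔ ((Ycf a ω = y ∧ A0 ω = a) ∧ L0 ω = l)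
    constructor
    · rintro ⟨h1, h2, h3⟩
      exact ⟨⟨(hω h2) ▸ h3, h2⟩, h1⟩
    · rintro ⟨⟨h1, h2⟩, h3⟩
      exact ⟨h3, h2, (hω h2).trans h1⟩
  have hSAY : ∀ a y, prb P ({ω | S ω = true} ∩ {ω | L0 ω = l ∧ A0 ω = a ∧ YK ω = y})
      = δ l * (1 - (if y = true then (1:ℝ) else 0)) *
        prb P {ω | L0 ω = l ∧ A0 ω = a ∧ YK ω = y} := by
    intro a y
    have h0 : 0 ≤ prb P {ω | L0 ω = l ∧ A0 ω = a ∧ YK ω = y} := ENNReal.toReal_nonneg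
    rcases h0.lt_or_eq with h | h
    · rw [← hS2 l a y h]
      unfold cprb
      rw [div_mul_cancel₀ _ h.ne']
    · rw [← h, mul_zero]
      refine le_antisymm ?_ ENNReal.toReal_nonneg
      rw [h]
      exact ENNReal.toReal_mono (measure_ne_top _ _) (measure_mono Set.inter_subset_right)
  have hSA : ∀ a, prb P ({ω | A0 ω = a} ∩ (F ∩ {ω | S ω = true}))
      = δ l * (cprb P {ω | Ycf a ω = false} F * cprb P {ω | A0 ω = a} F * prb P F) := by
    intro a
    rw [hsplit YK hYK, ← hAY]
    have e : ∀ y, {ω | A0 ω = a} ∩ (F ∩ {ω | S ω = true}) ∩ {ω | YK ω = y}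
        = {ω | S ω = true} ∩ {ω | L0 ω = l ∧ A0 ω = a ∧ YK ω = y} := by
      intro y
      ext ω
      simp only [hF, Set.mem_inter_iff, Set.mem_setOf_eq]
      tauto
    rw [e, e, hSAY, hSAY]
    simp
  have hYA : ∀ a, prb P ({ω | A0 ω = a} ∩ (F ∩ {ω | YK ω = true}))
      = cprb P {ω | Ycf a ω = true} F * cprb P {ω | A0 ω = a} F * prb P F := by
    intro a
    rw [← hAY]
    congr 1
    ext ω
    simp only [hF, Set.mem_inter_iff, Set.mem_setOf_eq]
    tauto
  have hsum : cprb P {ω | A0 ω = true} F + cprb P {ω | A0 ω = false} F = 1 := by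
    unfold cprb
    rw [← add_div, Set.inter_comm _ F, Set.inter_comm _ F, ← hsplit A0 hA0 F, div_self hL.ne']
  have hpt := hpos l hL
  have hpf : 0 < cprb P {ω | A0 ω = false} F := by
    have := hpt.2
    linarith
  have hFY : 0 < prb P (F ∩ {ω | YK ω = true}) := hlY
  have hFS : 0 < prb P (F ∩ {ω | S ω = true}) := hlS
  rw [hint, hint, hint, hint, hSA, hSA, hYA, hYA]
  have hp1 := hpt.1
  have ht := hodds true
  have hf := hodds false
  have hd := hδpos l
  obtain ⟨ht1, ht2⟩ := ht
  obtain ⟨hf1, hf2⟩ := hf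
  change 0 < cprb P {ω | A0 ω = true} F at hp1
  generalize cprb P {ω | A0 ω = true} F = p1 at *
  generalize cprb P {ω | A0 ω = false} F = p0 at *
  generalize cprb P {ω | Ycf true ω = true} F = a1 at *
  generalize cprb P {ω | Ycf true ω = false} F = a0 at *
  generalize cprb P {ω | Ycf false ω = true} F = b1 at *
  generalize cprb P {ω | Ycf false ω = false} F = b0 at *
  field_simp
end

section
/- Nonidentifiability of the marginal odds ratio under survivor sampling (Remark to Theorem B3). There exist two probability distributions P1 and P2 for a quadruple (L0, A0, Y_K, S) of {0,1}-valued random variables such that: (i) under both distributions, for some constant δ ∈ (0,1], P(S=1 | L0, A0, Y_K) = δ·(1−Y_K) (condition S2*); (ii) both distributions induce exactly the same conditional distribution of (L0, A0, Y_K, S) given the event {Y_K=1 or S=1} (the available case-control data distribution); and yet (iii) the g-formula marginal odds ratio Odds_g(1)/Odds_g(0), where for a ∈ {0,1}, p(a) := Σ_{l∈{0,1}} P(Y_K=1 | L0=l, A0=a)·P(L0=l) and Odds_g(a) := p(a)/(1−p(a)), takes the value 587791/167166 under P1 and the value 512539/148789 under P2; in particular these two values differ. Concretely, one may take both distributions to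 have the conditional structure Y_K ~ Bernoulli(α), S | Y_K ~ Bernoulli(δ(1−Y_K)), L0 | Y_K ~ Bernoulli(5/10 − (2/10)Y_K), A0 | L0, Y_K ~ Bernoulli(3/10 + (2/10)L0 + (3/10)Y_K), with (α, δ) = (1/10, 1/10) under P1 and (α, δ) = (2/10, 9/40) under P2. -/
open MeasureTheory

/-- The sample space for one observation `(L0, A0, Y_K, S)` with values in `{0,1}⁴`. -/
abbrev CCSpace : Type := Bool × Bool × Bool × Bool

/-- Bernoulli point mass: `bern p b = p` if `b` and `1 − p` otherwise. -/
def bern (p : ℝ) (b : Bool) : ℝ := if b then p else 1 - p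

/-- The joint point mass of `(L0, A0, Y_K, S)` determined by the conditional structure
`Y_K ~ Bernoulli(α)`, `S | Y_K ~ Bernoulli(δ(1−Y_K))`,
`L0 | Y_K ~ Bernoulli(5/10 − (2/10)Y_K)`,
`A0 | L0, Y_K ~ Bernoulli(3/10 + (2/10)L0 + (3/10)Y_K)`. -/
noncomputable def ccJoint (α δ : ℝ) (x : CCSpace) : ℝ :=
  bern α x.2.2.1 * bern (δ * (1 - (if x.2.2.1 then (1:ℝ) else 0))) x.2.2.2 *
    bern (5/10 - 2/10 * (if x.2.2.1 then (1:ℝ) else 0)) x.1 *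
    bern (3/10 + 2/10 * (if x.1 then (1:ℝ) else 0)
      + 3/10 * (if x.2.2.1 then (1:ℝ) else 0)) x.2.1

/-- The g-formula risk `p(a) = Σ_l P(Y_K=1 | L0=l, A0=a) · P(L0=l)`. -/
noncomputable def gRisk (P : Measure CCSpace) (a : Bool) : ℝ :=
  ∑ l : Bool,
    cprb P {ω | ω.2.2.1 = true} {ω | ω.1 = l ∧ ω.2.1 = a} * prb P {ω | ω.1 = l}

/-- The g-formula odds `Odds_g(a) = p(a)/(1−p(a))`. -/
noncomputable def gOdds (P : Measure CCSpace) (a : Bool) : ℝ :=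
  gRisk P a / (1 - gRisk P a)

/-- Condition S2*: `P(S=1 | L0, A0, Y_K) = δ·(1−Y_K)` for some constant `δ ∈ (0,1]`. -/
def SurvivorSampling (P : Measure CCSpace) : Prop :=
  ∃ δ : ℝ, 0 < δ ∧ δ ≤ 1 ∧ ∀ l a y : Bool,
    0 < prb P {ω | ω.1 = l ∧ ω.2.1 = a ∧ ω.2.2.1 = y} →
    cprb P {ω | ω.2.2.2 = true} {ω | ω.1 = l ∧ ω.2.1 = a ∧ ω.2.2.1 = y} =
      δ * (1 - (if y = true then (1:ℝ) else 0))

/-- The law on `CCSpace` with point masses `ccJoint α δ`. -/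
noncomputable def ccLaw (α δ : ℝ) : Measure CCSpace :=
  ∑ x : CCSpace, ENNReal.ofReal (ccJoint α δ x) • Measure.dirac x

lemma bern_nonneg {p : ℝ} (h0 : 0 ≤ p) (h1 : p ≤ 1) (b : Bool) : 0 ≤ bern p b := by
  cases b <;> simp [bern] <;> linarith

lemma ccJoint_nonneg {α δ : ℝ} (h0 : 0 ≤ α) (h1 : α ≤ 1) (d0 : 0 ≤ δ) (d1 : δ ≤ 1)
    (x : CCSpace) : 0 ≤ ccJoint α δ x := by
  obtain ⟨l, a, y, s⟩ := x
  unfold ccJoint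
  refine mul_nonneg (mul_nonneg (mul_nonneg (bern_nonneg h0 h1 _) (bern_nonneg ?_ ?_ _))
    (bern_nonneg ?_ ?_ _)) (bern_nonneg ?_ ?_ _) <;>
  cases l <;> cases y <;> norm_num <;> assumption

open Classical in
lemma prb_ccLaw {α δ : ℝ} (h0 : 0 ≤ α) (h1 : α ≤ 1) (d0 : 0 ≤ δ) (d1 : δ ≤ 1)
    (E : Set CCSpace) :
    prb (ccLaw α δ) E = ∑ x : CCSpace, if x ∈ E then ccJoint α δ x else 0 := by
  unfold prb ccLaw
  rw [Measure.finsetSum_apply, ENNReal.toReal_sum]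
  · refine Finset.sum_congr rfl fun x _ => ?_
    by_cases hx : x ∈ E <;>
      simp [hx, ENNReal.toReal_ofReal (ccJoint_nonneg h0 h1 d0 d1 x)]
  · intro x _
    by_cases hx : x ∈ E <;> simp [hx]

lemma ccLaw_isProb {α δ : ℝ} (h0 : 0 ≤ α) (h1 : α ≤ 1) (d0 : 0 ≤ δ) (d1 : δ ≤ 1) :
    IsProbabilityMeasure (ccLaw α δ) := by
  have h := prb_ccLaw h0 h1 d0 d1 Set.univ
  have h2 : prb (ccLaw α δ) Set.univ = 1 := by
    rw [h]
    simp [Fintype.sum_prod_type, ccJoint, bern]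
    ring
  constructor
  unfold prb at h2
  exact (ENNReal.toReal_eq_one_iff _).1 h2

lemma prb_singleton {α δ : ℝ} (h0 : 0 ≤ α) (h1 : α ≤ 1) (d0 : 0 ≤ δ) (d1 : δ ≤ 1)
    (x : CCSpace) : prb (ccLaw α δ) {x} = ccJoint α δ x := by
  rw [prb_ccLaw h0 h1 d0 d1]
  simp

lemma ccLaw_survivor {α δ : ℝ} (h0 : 0 < α) (h1 : α < 1) (d0 : 0 < δ) (d1 : δ ≤ 1) :
    SurvivorSampling (ccLaw α δ) := by
  refine ⟨δ, d0, d1, fun l a y hpos => ?_⟩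
  unfold cprb
  rw [div_eq_iff hpos.ne', prb_ccLaw h0.le h1.le d0.le d1, prb_ccLaw h0.le h1.le d0.le d1]
  cases l <;> cases a <;> cases y <;>
    simp [Fintype.sum_prod_type, ccJoint, bern] <;> ring

lemma ccLaw_odds1 : gOdds (ccLaw (1/10) (1/10)) true / gOdds (ccLaw (1/10) (1/10)) false
      = 587791 / 167166 := by
  have a1 : (0:ℝ) ≤ 1/10 := by norm_num
  have b1 : (1/10:ℝ) ≤ 1 := by norm_num
  simp only [gOdds, gRisk, cprb, prb_ccLaw a1 b1 a1 b1]
  simp [Fintype.sum_prod_type, ccJoint, bern]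
  norm_num

lemma ccLaw_odds2 : gOdds (ccLaw (2/10) (9/40)) true / gOdds (ccLaw (2/10) (9/40)) false
      = 512539 / 148789 := by
  have a2 : (0:ℝ) ≤ 2/10 := by norm_num
  have b2 : (2/10:ℝ) ≤ 1 := by norm_num
  have a3 : (0:ℝ) ≤ 9/40 := by norm_num
  have b3 : (9/40:ℝ) ≤ 1 := by norm_num
  simp only [gOdds, gRisk, cprb, prb_ccLaw a2 b2 a3 b3]
  simp [Fintype.sum_prod_type, ccJoint, bern]
  norm_num

set_option maxHeartbeats 2000000 in
lemma ccLaw_cond (x : CCSpace) :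
    cprb (ccLaw (1/10) (1/10)) {x} {ω | ω.2.2.1 = true ∨ ω.2.2.2 = true} =
      cprb (ccLaw (2/10) (9/40)) {x} {ω | ω.2.2.1 = true ∨ ω.2.2.2 = true} := by
  have a1 : (0:ℝ) ≤ 1/10 := by norm_num
  have b1 : (1/10:ℝ) ≤ 1 := by norm_num
  have a2 : (0:ℝ) ≤ 2/10 := by norm_num
  have b2 : (2/10:ℝ) ≤ 1 := by norm_num
  have a3 : (0:ℝ) ≤ 9/40 := by norm_num
  have b3 : (9/40:ℝ) ≤ 1 := by norm_num
  obtain ⟨l, a, y, s⟩ := x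
  simp only [cprb, prb_ccLaw a1 b1 a1 b1, prb_ccLaw a2 b2 a3 b3]
  cases l <;> cases a <;> cases y <;> cases s <;>
    simp [Fintype.sum_prod_type, ccJoint, bern] <;> norm_num

/-- Remark to Theorem B3: the marginal g-formula odds ratio is not identified from the
available case-control data distribution under survivor sampling. There exist two
probability laws of `(L0, A0, Y_K, S)` — concretely, those with the stated Bernoulli
conditional structure, with `(α, δ) = (1/10, 1/10)` and `(α, δ) = (2/10, 9/40)`
respectively — that satisfy S2*, induce the same conditional distribution given the
selection event `{Y_K=1 ∨ S=1}`, and yet have different g-formula marginal odds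
ratios (`587791/167166` vs. `512539/148789`). -/
theorem survivor_marginal_oddsRatio_nonidentifiable :
    ∃ P1 P2 : Measure CCSpace,
      IsProbabilityMeasure P1 ∧ IsProbabilityMeasure P2 ∧
      (∀ x : CCSpace, prb P1 {x} = ccJoint (1/10) (1/10) x) ∧
      (∀ x : CCSpace, prb P2 {x} = ccJoint (2/10) (9/40) x) ∧
      SurvivorSampling P1 ∧ SurvivorSampling P2 ∧
      (∀ x : CCSpace,
        cprb P1 {x} {ω | ω.2.2.1 = true ∨ ω.2.2.2 = true} =
          cprb P2 {x} {ω | ω.2.2.1 = true ∨ ω.2.2.2 = true}) ∧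
      gOdds P1 true / gOdds P1 false = 587791 / 167166 ∧
      gOdds P2 true / gOdds P2 false = 512539 / 148789 ∧
      gOdds P1 true / gOdds P1 false ≠ gOdds P2 true / gOdds P2 false := by
  have a1 : (0:ℝ) ≤ 1/10 := by norm_num
  have b1 : (1/10:ℝ) ≤ 1 := by norm_num
  have a2 : (0:ℝ) ≤ 2/10 := by norm_num
  have b2 : (2/10:ℝ) ≤ 1 := by norm_num
  have a3 : (0:ℝ) ≤ 9/40 := by norm_num
  have b3 : (9/40:ℝ) ≤ 1 := by norm_num
  have o1 := ccLaw_odds1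
  have o2 := ccLaw_odds2
  refine ⟨ccLaw (1/10) (1/10), ccLaw (2/10) (9/40), ccLaw_isProb a1 b1 a1 b1,
    ccLaw_isProb a2 b2 a3 b3, prb_singleton a1 b1 a1 b1, prb_singleton a2 b2 a3 b3,
    ccLaw_survivor (by norm_num) (by norm_num) (by norm_num) b1,
    ccLaw_survivor (by norm_num) (by norm_num) (by norm_num) b3, ?_, o1, o2, ?_⟩
  · exact ccLaw_cond
  · rw [o1, o2]
    norm_num
end

section
/- Risk-set sampling identifies the conditional intention-to-treat hazard ratio (Theorem B5). Assume there are constants δ_l ∈ (0,1] such that for each k = 0,…,K−1, P(S_k=1 | L0=l, A0=a, Y_k=y) = δ_l·(1−y) for all l, a, y with P(L0=l, A0=a, Y_k=y) > 0. Assume consistency, BCE, positivity, and the homogeneity condition H3: there are constants θ_0, θ_1 with θ_0 ≠ 0 such that P(Y_{k+1}(a)=1 | L0=l, Y_k(a)=0) = θ_a for a = 0,1, all k = 0,…,K−1, and all l with P(L0=l, Y_k(a)=0) > 0. Fix l with P(L0=l, Y_K=1) > 0 and such that all displayed ratios have nonzero denominators. Then ( E[1{A0=1} | L0=l, Y_K=1]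 / E[1{A0=0} | L0=l, Y_K=1] ) / ( E[1{A0=1}·Σ_{k=0}^{K−1} S_k | L0=l] / E[1{A0=0}·Σ_{k=0}^{K−1} S_k | L0=l] ) = θ_1/θ_0, which equals P(Y_{k+1}(1)=1 | L0=l, Y_k(1)=0) / P(Y_{k+1}(0)=1 | L0=l, Y_k(0)=0) for every k. -/
open MeasureTheory

lemma fiber_aux {Ω ι : Type*} [MeasurableSpace Ω] [Fintype ι] (ν : Measure Ω) [IsFiniteMeasure ν]
    (Z : Ω → ι) (hZ : ∀ z, MeasurableSet (Z ⁻¹' {z})) (B : Set Ω) (c q : ℝ)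
    (h : ∀ z, ν.real (Z ⁻¹' {z} ∩ B) * c = ν.real (Z ⁻¹' {z}) * q) (T : Set ι) :
    ν.real (Z ⁻¹' T ∩ B) * c = ν.real (Z ⁻¹' T) * q := by
  classical
  have e : T = ((Finset.univ.filter (· ∈ T) : Finset ι) : Set ι) := by ext; simp
  have hm : MeasurableSet (Z ⁻¹' T) := by
    rw [e, ← Set.biUnion_preimage_singleton]
    exact Finset.measurableSet_biUnion _ fun z _ => hZ z
  have h1 := sum_measureReal_preimage_singleton (μ := ν) (Finset.univ.filter (· ∈ T))
    (f := Z) (fun y _ => hZ y)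
  have h2 := sum_measureReal_preimage_singleton (μ := ν.restrict B) (Finset.univ.filter (· ∈ T))
    (f := Z) (fun y _ => hZ y)
  rw [← e] at h1 h2
  rw [measureReal_restrict_apply hm] at h2
  rw [← h1, ← h2, Finset.sum_mul, Finset.sum_mul]
  refine Finset.sum_congr rfl fun z _ => ?_
  rw [measureReal_restrict_apply (hZ z), h z]

lemma int_aux {Ω : Type*} [MeasurableSpace Ω] (ν : Measure Ω) [IsFiniteMeasure ν]
    (p : Ω → Prop) [DecidablePred p] (hp : MeasurableSet {ω | p ω}) :
    ∫ ω, (if p ω then (1:ℝ) else 0) ∂ν = ν.real {ω | p ω} := by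
  rw [← integral_indicator_one hp]
  refine integral_congr_ae (Filter.Eventually.of_forall fun ω => ?_)
  simp [Set.indicator_apply]

/-- Theorem B5: risk-set sampling identifies the conditional intention-to-treat
(discrete-time) hazard ratio. -/
theorem riskSet_conditional_ITT_hazardRatio
    {Ω : Type*} [MeasurableSpace Ω] (P : Measure Ω) [IsProbabilityMeasure P]
    {𝓛 : Type*} [Fintype 𝓛] [MeasurableSpace 𝓛]
    (K : ℕ) (hK : 0 < K)
    (L0 : Ω → 𝓛) (A0 : Ω → Bool) (Y : ℕ → Ω → Bool)
    (Ycf : Bool → ℕ → Ω → Bool) (S : ℕ → Ω → Bool)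
    (hL0 : Measurable L0) (hA0 : Measurable A0) (hY : ∀ k, Measurable (Y k))
    (hYcfm : ∀ a k, Measurable (Ycf a k)) (hSm : ∀ k, Measurable (S k))
    (hY0 : ∀ ω, Y 0 ω = false)
    (hYmono : ∀ k, k < K → ∀ ω, Y k ω = true → Y (k+1) ω = true)
    (hYcf0 : ∀ a, ∀ ω, Ycf a 0 ω = false)
    (hYcfmono : ∀ a, ∀ k, k < K → ∀ ω, Ycf a k ω = true → Ycf a (k+1) ω = true)
    -- covariate-dependent sampling fractions (weak version of S3)
    (δ : 𝓛 → ℝ) (hδpos : ∀ l, 0 < δ l) (hδle : ∀ l, δ l ≤ 1)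
    (hS3 : ∀ k, k < K → ∀ (l : 𝓛) (a y : Bool),
      0 < prb P {ω | L0 ω = l ∧ A0 ω = a ∧ Y k ω = y} →
      cprb P {ω | S k ω = true} {ω | L0 ω = l ∧ A0 ω = a ∧ Y k ω = y} =
        δ l * (1 - (if y = true then (1:ℝ) else 0)))
    -- consistency
    (hcons : ∀ a : Bool, ∀ᵐ ω ∂P, A0 ω = a → ∀ k ≤ K, Y k ω = Ycf a k ω)
    -- baseline conditional exchangeability: (Y_1(a),…,Y_K(a)) ⫫ A0 | L0
    (hBCE : ∀ (a : Bool) (l : 𝓛) (y : ℕ → Bool) (a' : Bool),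
      cprb P {ω | (∀ k, 1 ≤ k → k ≤ K → Ycf a k ω = y k) ∧ A0 ω = a'}
          {ω | L0 ω = l} =
        cprb P {ω | ∀ k, 1 ≤ k → k ≤ K → Ycf a k ω = y k} {ω | L0 ω = l} *
          cprb P {ω | A0 ω = a'} {ω | L0 ω = l})
    -- positivity
    (hpos : ∀ l : 𝓛, 0 < prb P {ω | L0 ω = l} →
      0 < cprb P {ω | A0 ω = true} {ω | L0 ω = l} ∧
        cprb P {ω | A0 ω = true} {ω | L0 ω = l} < 1)
    -- homogeneity condition H3: constant conditional counterfactual hazards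
    (θ : Bool → ℝ) (hθ0 : θ false ≠ 0)
    (hH3 : ∀ (a : Bool) (k : ℕ), k < K → ∀ l : 𝓛,
      0 < prb P {ω | L0 ω = l ∧ Ycf a k ω = false} →
      cprb P {ω | Ycf a (k+1) ω = true} {ω | L0 ω = l ∧ Ycf a k ω = false} = θ a)
    -- the fixed covariate level l
    (l : 𝓛)
    (hlY : 0 < prb P {ω | L0 ω = l ∧ Y K ω = true})
    -- well-definedness and nonzero denominators
    (hint : ∀ a : Bool,
      Integrable (fun ω => (if A0 ω = a then (1:ℝ) else 0) *
        (∑ k ∈ Finset.range K, if S k ω = true then (1:ℝ) else 0))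
        (P.restrict {ω | L0 ω = l}))
    (hd1 : cexpb P (fun ω => if A0 ω = false then (1:ℝ) else 0)
        ({ω | L0 ω = l} ∩ {ω | Y K ω = true}) ≠ 0)
    (hd2 : cexpb P (fun ω => (if A0 ω = false then (1:ℝ) else 0) *
        (∑ k ∈ Finset.range K, if S k ω = true then (1:ℝ) else 0)) {ω | L0 ω = l} ≠ 0)
    (hd3 : cexpb P (fun ω => (if A0 ω = true then (1:ℝ) else 0) *
          (∑ k ∈ Finset.range K, if S k ω = true then (1:ℝ) else 0)) {ω | L0 ω = l} /
        cexpb P (fun ω => (if A0 ω = false then (1:ℝ) else 0) *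
          (∑ k ∈ Finset.range K, if S k ω = true then (1:ℝ) else 0)) {ω | L0 ω = l} ≠ 0) :
    (cexpb P (fun ω => if A0 ω = true then (1:ℝ) else 0)
        ({ω | L0 ω = l} ∩ {ω | Y K ω = true}) /
      cexpb P (fun ω => if A0 ω = false then (1:ℝ) else 0)
        ({ω | L0 ω = l} ∩ {ω | Y K ω = true})) /
    (cexpb P (fun ω => (if A0 ω = true then (1:ℝ) else 0) *
        (∑ k ∈ Finset.range K, if S k ω = true then (1:ℝ) else 0)) {ω | L0 ω = l} /
      cexpb P (fun ω => (if A0 ω = false then (1:ℝ) else 0) *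
        (∑ k ∈ Finset.range K, if S k ω = true then (1:ℝ) else 0)) {ω | L0 ω = l}) =
    θ true / θ false
    ∧
    ∀ k, k < K →
      0 < prb P {ω | L0 ω = l ∧ Ycf true k ω = false} →
      0 < prb P {ω | L0 ω = l ∧ Ycf false k ω = false} →
      θ true / θ false =
        cprb P {ω | Ycf true (k+1) ω = true} {ω | L0 ω = l ∧ Ycf true k ω = false} /
          cprb P {ω | Ycf false (k+1) ω = true}
            {ω | L0 ω = l ∧ Ycf false k ω = false} := by
  refine ⟨?_, fun k hk h1 h2 => by rw [hH3 true k hk l h1, hH3 false k hk l h2]⟩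
  set F : Set Ω := {ω | L0 ω = l} with hF
  set ν : Measure Ω := P.restrict F with hν
  have mA : ∀ a, MeasurableSet {ω | A0 ω = a} := fun a => hA0 (measurableSet_singleton a)
  have mY : ∀ k a, MeasurableSet {ω | Y k ω = a} := fun k a => hY k (measurableSet_singleton a)
  have mS : ∀ k a, MeasurableSet {ω | S k ω = a} := fun k a => hSm k (measurableSet_singleton a)
  have mC : ∀ b k a, MeasurableSet {ω | Ycf b k ω = a} :=
    fun b k a => hYcfm b k (measurableSet_singleton a)
  have key : ∀ E : Set Ω, MeasurableSet E → prb P (E ∩ F) = ν.real E := by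
    intro E hE
    rw [prb, measureReal_def, hν, Measure.restrict_apply hE]
  have keyF : prb P F = ν.real Set.univ := by
    rw [← key _ MeasurableSet.univ, Set.univ_inter]
  have hlY' : 0 < ν.real {ω | Y K ω = true} := by
    rw [← key _ (mY _ _), Set.inter_comm]; exact hlY
  have hc : 0 < ν.real Set.univ := lt_of_lt_of_le hlY' (measureReal_mono (Set.subset_univ _))
  set c := ν.real Set.univ with hcdef
  -- exchangeability for arbitrary events
  have bce : ∀ a : Bool, ∀ T : Set (Fin K → Bool),
      ν.real ((fun ω => fun i : Fin K => Ycf a (i+1) ω) ⁻¹' T ∩ {ω | A0 ω = a}) * c =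
      ν.real ((fun ω => fun i : Fin K => Ycf a (i+1) ω) ⁻¹' T) * ν.real {ω | A0 ω = a} := by
    intro a T
    have hZ : ∀ z : Fin K → Bool,
        MeasurableSet ((fun ω => fun i : Fin K => Ycf a (i+1) ω) ⁻¹' {z}) := fun z =>
      (measurable_pi_lambda _ fun i : Fin K => hYcfm a (i+1)) (measurableSet_singleton z)
    refine fiber_aux ν _ hZ _ c _ (fun z => ?_) T
    have h := hBCE a l (fun k => if h : k - 1 < K then z ⟨k-1, h⟩ else false) a
    have e1 : {ω | ∀ k, 1 ≤ k → k ≤ K →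
        Ycf a k ω = (fun k => if h : k - 1 < K then z ⟨k-1, h⟩ else false) k} =
        ((fun ω => fun i : Fin K => Ycf a (i+1) ω) ⁻¹' {z}) := by
      ext ω
      simp only [Set.mem_ofPred_eq, Set.mem_preimage, Set.mem_singleton_iff]
      constructor
      · intro h
        funext i
        have := h (i+1) (by omega) (by omega)
        simpa using this
      · rintro h k h1 h2
        have := congrFun h ⟨k-1, by omega⟩
        simp only at this
        rw [dif_pos (by omega), ← this, Nat.sub_add_cancel h1]
    rw [Set.ofPred_and, e1] at h
    simp only [cprb] at h
    rw [← hF, key _ ((hZ z).inter (mA a)), key _ (hZ z), key _ (mA a), keyF] at h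
    have hc' := hc.ne'
    field_simp at h
    linarith
  -- replace Y by Ycf on A0 = a
  have cons : ∀ a : Bool, ∀ᵐ ω ∂ν, A0 ω = a → ∀ k ≤ K, Y k ω = Ycf a k ω :=
    fun a => ae_restrict_of_ae (hcons a)
  have step : ∀ a k, k < K →
      ν.real {ω | A0 ω = a ∧ Y k ω = false ∧ Y (k+1) ω = true} =
        θ a * ν.real {ω | A0 ω = a ∧ Y k ω = false} := by
    intro a k hk
    have r1 : ν.real {ω | A0 ω = a ∧ Y k ω = false ∧ Y (k+1) ω = true} =
        ν.real ({ω | Ycf a k ω = false ∧ Ycf a (k+1) ω = true} ∩ {ω | A0 ω = a}) := by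
      refine measureReal_congr ?_
      filter_upwards [cons a] with ω hω
      apply propext
      change (_ ∧ _ ∧ _) ↔ ((_ ∧ _) ∧ _)
      constructor
      · rintro ⟨h1, h2, h3⟩
        exact ⟨⟨by rw [← hω h1 k hk.le]; exact h2, by rw [← hω h1 (k+1) hk]; exact h3⟩, h1⟩
      · rintro ⟨⟨h2, h3⟩, h1⟩
        exact ⟨h1, by rw [hω h1 k hk.le]; exact h2, by rw [hω h1 (k+1) hk]; exact h3⟩
    have r2 : ν.real {ω | A0 ω = a ∧ Y k ω = false} =
        ν.real ({ω | Ycf a k ω = false} ∩ {ω | A0 ω = a}) := by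
      refine measureReal_congr ?_
      filter_upwards [cons a] with ω hω
      apply propext
      change (_ ∧ _) ↔ (_ ∧ _)
      constructor
      · rintro ⟨h1, h2⟩
        exact ⟨(hω h1 k hk.le).symm.trans h2, h1⟩
      · rintro ⟨h2, h1⟩
        exact ⟨h1, by rw [hω h1 k hk.le]; exact h2⟩
    have b1 : ν.real ({ω | Ycf a k ω = false ∧ Ycf a (k+1) ω = true} ∩ {ω | A0 ω = a}) * c =
        ν.real {ω | Ycf a k ω = false ∧ Ycf a (k+1) ω = true} * ν.real {ω | A0 ω = a} := by
      rcases k with _ | k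
      · convert bce a {z | z ⟨0, hk⟩ = true} using 4 <;> (ext ω; simp [hYcf0])
      · convert bce a {z | z ⟨k, by omega⟩ = false ∧ z ⟨k+1, hk⟩ = true} using 4 <;> (ext ω; simp)
    have b2 : ν.real ({ω | Ycf a k ω = false} ∩ {ω | A0 ω = a}) * c =
        ν.real {ω | Ycf a k ω = false} * ν.real {ω | A0 ω = a} := by
      rcases k with _ | k
      · convert bce a Set.univ using 4 <;> (ext ω; simp [hYcf0])
      · convert bce a {z | z ⟨k, by omega⟩ = false} using 4 <;> (ext ω; simp)
    have h3 : ν.real {ω | Ycf a k ω = false ∧ Ycf a (k+1) ω = true} =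
        θ a * ν.real {ω | Ycf a k ω = false} := by
      have e0 : prb P {ω | L0 ω = l ∧ Ycf a k ω = false} = ν.real {ω | Ycf a k ω = false} := by
        rw [← key _ (mC _ _ _), Set.inter_comm]; rfl
      have e1 : prb P ({ω | Ycf a (k+1) ω = true} ∩ {ω | L0 ω = l ∧ Ycf a k ω = false}) =
          ν.real {ω | Ycf a k ω = false ∧ Ycf a (k+1) ω = true} := by
        rw [← key {ω | Ycf a k ω = false ∧ Ycf a (k+1) ω = true} ((mC _ _ _).inter (mC _ _ _))]
        congr 1
        ext ω
        simp only [Set.mem_inter_iff, Set.mem_ofPred_eq, hF]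
        tauto
      rcases (measureReal_nonneg (μ := ν) (s := {ω | Ycf a k ω = false})).eq_or_lt with h0 | h0
      · rw [← h0, mul_zero]
        exact le_antisymm (h0 ▸ measureReal_mono (fun ω h => h.1)) measureReal_nonneg
      · have h := hH3 a k hk l (by rw [e0]; exact h0)
        rw [cprb, e0, e1, div_eq_iff h0.ne'] at h
        exact h
    rw [r1, r2]
    apply mul_right_cancel₀ hc.ne'
    rw [b1, h3, mul_assoc, mul_assoc, b2]
  have hsamp : ∀ a k, k < K → ν.real {ω | A0 ω = a ∧ S k ω = true} =
      δ l * ν.real {ω | A0 ω = a ∧ Y k ω = false} := by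
    intro a k hk
    have part : ∀ y : Bool, ν.real {ω | A0 ω = a ∧ S k ω = true ∧ Y k ω = y} =
        δ l * (1 - (if y = true then (1:ℝ) else 0)) * ν.real {ω | A0 ω = a ∧ Y k ω = y} := by
      intro y
      have e0 : prb P {ω | L0 ω = l ∧ A0 ω = a ∧ Y k ω = y} =
          ν.real {ω | A0 ω = a ∧ Y k ω = y} := by
        rw [← key {ω | A0 ω = a ∧ Y k ω = y} ((mA _).inter (mY _ _)), Set.inter_comm]; rfl
      have e1 : prb P ({ω | S k ω = true} ∩ {ω | L0 ω = l ∧ A0 ω = a ∧ Y k ω = y}) =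
          ν.real {ω | A0 ω = a ∧ S k ω = true ∧ Y k ω = y} := by
        rw [← key {ω | A0 ω = a ∧ S k ω = true ∧ Y k ω = y}
          ((mA _).inter ((mS _ _).inter (mY _ _)))]
        congr 1
        ext ω
        simp only [Set.mem_inter_iff, Set.mem_ofPred_eq, hF]
        tauto
      rcases (measureReal_nonneg (μ := ν) (s := {ω | A0 ω = a ∧ Y k ω = y})).eq_or_lt with h0 | h0
      · rw [← h0, mul_zero]
        exact le_antisymm (h0 ▸ measureReal_mono (fun ω h => ⟨h.1, h.2.2⟩)) measureReal_nonneg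
      · have h := hS3 k hk l a y (by rw [e0]; exact h0)
        rw [cprb, e0, e1, div_eq_iff h0.ne'] at h
        exact h
    have hsplit := measureReal_inter_add_sdiff (μ := ν) (s := {ω | A0 ω = a ∧ S k ω = true}) (mY k true)
    have p1 : {ω | A0 ω = a ∧ S k ω = true} ∩ {ω | Y k ω = true} =
        {ω | A0 ω = a ∧ S k ω = true ∧ Y k ω = true} := by
      ext ω; simp [and_assoc]
    have p2 : {ω | A0 ω = a ∧ S k ω = true} \ {ω | Y k ω = true} =
        {ω | A0 ω = a ∧ S k ω = true ∧ Y k ω = false} := by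
      ext ω; simp [and_assoc]
    rw [p1, p2, part true, part false] at hsplit
    simp at hsplit
    exact hsplit.symm
  have hcase : ∀ a n, n ≤ K → ν.real {ω | A0 ω = a ∧ Y n ω = true} =
      θ a * ∑ k ∈ Finset.range n, ν.real {ω | A0 ω = a ∧ Y k ω = false} := by
    intro a n
    induction n with
    | zero => intro _; simp [hY0]
    | succ n ih =>
      intro hn
      rw [Finset.sum_range_succ, mul_add, ← ih (by omega), ← step a n (by omega)]
      have hsplit := measureReal_inter_add_sdiff (μ := ν) (s := {ω | A0 ω = a ∧ Y (n+1) ω = true})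
        (mY n true)
      have p1 : {ω | A0 ω = a ∧ Y (n+1) ω = true} ∩ {ω | Y n ω = true} =
          {ω | A0 ω = a ∧ Y n ω = true} := by
        ext ω
        simp only [Set.mem_inter_iff, Set.mem_ofPred_eq]
        have := hYmono n (by omega) ω
        tauto
      have p2 : {ω | A0 ω = a ∧ Y (n+1) ω = true} \ {ω | Y n ω = true} =
          {ω | A0 ω = a ∧ Y n ω = false ∧ Y (n+1) ω = true} := by
        ext ω
        simp only [Set.mem_diff, Set.mem_ofPred_eq, Bool.not_eq_true]
        tauto
      rw [p1, p2] at hsplit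
      exact hsplit.symm
  have hctrl : ∀ a, cexpb P (fun ω => (if A0 ω = a then (1:ℝ) else 0) *
        (∑ k ∈ Finset.range K, if S k ω = true then (1:ℝ) else 0)) F =
      δ l * (∑ k ∈ Finset.range K, ν.real {ω | A0 ω = a ∧ Y k ω = false}) / c := by
    intro a
    rw [cexpb, keyF, Finset.mul_sum]
    congr 1
    have e : ∀ ω, (if A0 ω = a then (1:ℝ) else 0) *
        (∑ k ∈ Finset.range K, if S k ω = true then (1:ℝ) else 0) =
        ∑ k ∈ Finset.range K, if (A0 ω = a ∧ S k ω = true) then (1:ℝ) else 0 := by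
      intro ω
      by_cases h : A0 ω = a <;> simp [h]
    simp_rw [e]
    have mAS : ∀ k, MeasurableSet {ω | A0 ω = a ∧ S k ω = true} :=
      fun k => (mA a).inter (mS k true)
    rw [integral_finsetSum]
    · refine Finset.sum_congr rfl fun k hk => ?_
      rw [int_aux _ _ (mAS k), ← hsamp a k (Finset.mem_range.1 hk)]
    · intro k _
      refine ((integrable_const (1:ℝ)).indicator (mAS k)).congr
        (Filter.Eventually.of_forall fun ω => ?_)
      simp [Set.indicator_apply]
  have hcs : ∀ a, cexpb P (fun ω => if A0 ω = a then (1:ℝ) else 0)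
        (F ∩ {ω | Y K ω = true}) =
      θ a * (∑ k ∈ Finset.range K, ν.real {ω | A0 ω = a ∧ Y k ω = false}) /
        ν.real {ω | Y K ω = true} := by
    intro a
    rw [cexpb, Set.inter_comm, key _ (mY _ _), ← hcase a K le_rfl,
      ← Measure.restrict_restrict (mY K true), ← hν, int_aux _ _ (mA a),
      measureReal_restrict_apply (mA a)]
    rfl
  simp only [hctrl, hcs] at *
  have hδ := hδpos l
  generalize (∑ k ∈ Finset.range K, ν.real {ω | A0 ω = true ∧ Y k ω = false}) = x at *
  generalize (∑ k ∈ Finset.range K, ν.real {ω | A0 ω = false ∧ Y k ω = false}) = y at *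
  have hx : x ≠ 0 := by rintro rfl; simp at hd3
  have hy : y ≠ 0 := by rintro rfl; simp at hd2
  have h1 := hlY'.ne'
  have h2 := hc.ne'
  have h3 := hδ.ne'
  field_simp
end
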